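/- arXiv:2309.13180 — 4 statements merged into one kernel-verified Lean document; each statement's English description precedes it below -/
import Mathlib

section
/- Let G be a finite simple graph with no isolated vertices and positive edge weights σ, let Γ_star be the family of stars of G, and let δ(G) = min_{v∈V} deg(v) be the minimum degree. Then for 1 ≤ p < ∞: σ_min / δ(G)^p ≤ Mod_{p,σ}(Γ_star) ≤ σ(E) / δ(G)^p, where σ_min = min_{e∈E} σ(e) and σ(E) = Σ_{e∈E} σ(e). -/
open Finset

noncomputable section
open scoped Classical

variable {V : Type*}

/-- The set of admissible densities for a family `Γ` of objects on the edge set of `G`.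
Densities are elements of `ℝ^E_{≥0}`, modeled as nonnegative functions on `Sym2 V`
vanishing outside the edge set of `G`. `ρ` is admissible if `ℓ_ρ(γ) ≥ 1` for all `γ ∈ Γ`. -/
def Adm [Fintype V] [DecidableEq V] (G : SimpleGraph V) (Γ : Set (Sym2 V → ℝ)) :
    Set (Sym2 V → ℝ) :=
  {ρ | (∀ e, 0 ≤ ρ e) ∧ (∀ e ∉ G.edgeSet, ρ e = 0) ∧
    ∀ γ ∈ Γ, 1 ≤ ∑ e ∈ G.edgeFinset, γ e * ρ e}

/-- The `p`-energy of a density `ρ` with edge weights `σ`: `Σ_e σ(e) ρ(e)^p`. -/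
def energy [Fintype V] [DecidableEq V] (p : ℝ) (σ : Sym2 V → ℝ) (G : SimpleGraph V)
    (ρ : Sym2 V → ℝ) : ℝ :=
  ∑ e ∈ G.edgeFinset, σ e * ρ e ^ p

/-- The `p`-modulus of a family `Γ` with edge weights `σ`:
the infimum of the `p`-energy over admissible densities. -/
def Modulus [Fintype V] [DecidableEq V] (p : ℝ) (σ : Sym2 V → ℝ) (G : SimpleGraph V)
    (Γ : Set (Sym2 V → ℝ)) : ℝ :=
  sInf (energy p σ G '' Adm G Γ)

/-- The unweighted 2-energy `Σ_e ρ(e)²`. -/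
def energy2 [Fintype V] [DecidableEq V] (G : SimpleGraph V) (ρ : Sym2 V → ℝ) : ℝ :=
  ∑ e ∈ G.edgeFinset, ρ e ^ 2

/-- The unweighted 2-modulus. -/
def Mod2 [Fintype V] [DecidableEq V] (G : SimpleGraph V) (Γ : Set (Sym2 V → ℝ)) : ℝ :=
  sInf (energy2 G '' Adm G Γ)

/-- `C` is an edge cover of `G`: a set of edges of `G` meeting every vertex. -/
def IsEdgeCover [Fintype V] [DecidableEq V] (G : SimpleGraph V) (C : Finset (Sym2 V)) : Prop :=
  ↑C ⊆ G.edgeSet ∧ ∀ v : V, ∃ e ∈ C, v ∈ e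

/-- The family `Γ_ec` of indicator vectors of edge covers of `G`. -/
def Γec [Fintype V] [DecidableEq V] (G : SimpleGraph V) : Set (Sym2 V → ℝ) :=
  {γ | ∃ C : Finset (Sym2 V), IsEdgeCover G C ∧ γ = fun e => if e ∈ C then 1 else 0}

/-- The family `Γ_fec` of fractional edge covers of `G`: nonnegative vectors on the edge
set with `Σ_{e ∈ δ(v)} γ(e) ≥ 1` at every vertex `v`. -/
def Γfec [Fintype V] [DecidableEq V] (G : SimpleGraph V) : Set (Sym2 V → ℝ) :=
  {γ | (∀ e, 0 ≤ γ e) ∧ (∀ e ∉ G.edgeSet, γ e = 0) ∧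
    ∀ v : V, 1 ≤ ∑ e ∈ G.incidenceFinset v, γ e}

/-- The family `Γ_star` of indicator vectors of the stars `δ(v)`, `v ∈ V`. -/
def Γstar [Fintype V] [DecidableEq V] (G : SimpleGraph V) : Set (Sym2 V → ℝ) :=
  {γ | ∃ v : V, γ = fun e => if e ∈ G.incidenceFinset v then 1 else 0}

/-- The subgraph of `G` whose edge set is the support `{e : γ(e) > 0}` of `γ`. -/
def suppGraph (G : SimpleGraph V) (γ : Sym2 V → ℝ) : SimpleGraph V where
  Adj u v := G.Adj u v ∧ 0 < γ s(u, v)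
  symm := by
    constructor
    intro u v h
    refine ⟨h.1.symm, ?_⟩
    rw [Sym2.eq_swap]
    exact h.2
  loopless := ⟨fun v h => G.loopless.irrefl v h.1⟩

/-- `σ_min / δ(G)^p ≤ Mod_{p,σ}(Γ_star) ≤ σ(E) / δ(G)^p`. -/
theorem mod_star_bounds [Fintype V] [DecidableEq V] [Nonempty V] (G : SimpleGraph V)
    [DecidableRel G.Adj] (hiso : ∀ v : V, ∃ u, G.Adj v u) (hE : G.edgeFinset.Nonempty)
    (σ : Sym2 V → ℝ) (hσ : ∀ e, 0 < σ e) (p : ℝ) (hp : 1 ≤ p) :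
    G.edgeFinset.inf' hE σ / (G.minDegree : ℝ) ^ p ≤ Modulus p σ G (Γstar G) ∧
    Modulus p σ G (Γstar G) ≤ (∑ e ∈ G.edgeFinset, σ e) / (G.minDegree : ℝ) ^ p := by
  have hdpos : 0 < G.minDegree := by
    obtain ⟨v, hv⟩ := G.exists_minimal_degree_vertex
    rw [hv, G.degree_pos_iff_exists_adj]
    exact hiso v
  have hd : (0 : ℝ) < (G.minDegree : ℝ) := by exact_mod_cast hdpos
  have hdp : (0 : ℝ) < (G.minDegree : ℝ) ^ p := Real.rpow_pos_of_pos hd p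
  have key : ∀ (ρ : Sym2 V → ℝ) (v : V),
      (∑ e ∈ G.edgeFinset, (if e ∈ G.incidenceFinset v then (1 : ℝ) else 0) * ρ e)
        = ∑ e ∈ G.incidenceFinset v, ρ e := by
    intro ρ v
    simp only [ite_mul, one_mul, zero_mul]
    rw [← Finset.sum_filter]
    congr 1
    ext e
    simp only [Finset.mem_filter, SimpleGraph.mem_edgeFinset, SimpleGraph.mem_incidenceFinset]
    exact ⟨fun h => h.2, fun h => ⟨h.1, h⟩⟩
  have hadm : ∀ ρ : Sym2 V → ℝ, ρ ∈ Adm G (Γstar G) ↔ (∀ e, 0 ≤ ρ e) ∧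
      (∀ e ∉ G.edgeSet, ρ e = 0) ∧ ∀ v, 1 ≤ ∑ e ∈ G.incidenceFinset v, ρ e := by
    intro ρ
    have : (∀ γ ∈ Γstar G, 1 ≤ ∑ e ∈ G.edgeFinset, γ e * ρ e) ↔
        ∀ v, 1 ≤ ∑ e ∈ G.incidenceFinset v, ρ e := by
      constructor
      · intro h v
        rw [← key]
        refine (h _ ⟨v, rfl⟩).trans (le_of_eq ?_)
        refine Finset.sum_congr rfl fun e _ => ?_
        simp only [SimpleGraph.mem_incidenceFinset]
      · rintro h γ ⟨v, rfl⟩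
        refine (h v).trans (le_of_eq ?_)
        rw [← key]
        refine Finset.sum_congr rfl fun e _ => ?_
        simp only [SimpleGraph.mem_incidenceFinset]
    rw [← this]
    unfold Adm
    simp only [Set.mem_setOf_eq]
    convert Iff.rfl
  have hen : ∀ ρ : Sym2 V → ℝ, energy p σ G ρ = ∑ e ∈ G.edgeFinset, σ e * ρ e ^ p := by
    intro ρ
    unfold energy
    convert rfl
  have hmem : (fun e => if e ∈ G.edgeFinset then (G.minDegree : ℝ)⁻¹ else 0) ∈
      Adm G (Γstar G) := by
    rw [hadm]
    refine ⟨fun e => ?_, fun e he => ?_, fun v => ?_⟩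
    · split_ifs <;> positivity
    · simp [he]
    · have h1 : ∀ e ∈ G.incidenceFinset v,
          (if e ∈ G.edgeFinset then (G.minDegree : ℝ)⁻¹ else 0) = (G.minDegree : ℝ)⁻¹ := by
        intro e he
        rw [SimpleGraph.mem_incidenceFinset] at he
        rw [if_pos (SimpleGraph.mem_edgeFinset.2 he.1)]
      rw [Finset.sum_congr rfl h1, Finset.sum_const, SimpleGraph.card_incidenceFinset_eq_degree,
        nsmul_eq_mul, ← div_eq_mul_inv, one_le_div hd]
      exact_mod_cast G.minDegree_le_degree v
  constructor
  · refine le_csInf ⟨_, _, hmem, rfl⟩ ?_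
    rintro _ ⟨ρ, hρ, rfl⟩
    rw [hadm] at hρ
    obtain ⟨h0, -, h2⟩ := hρ
    obtain ⟨v, hv⟩ := G.exists_minimal_degree_vertex
    obtain ⟨e, he, hle⟩ : ∃ e ∈ G.incidenceFinset v, (G.minDegree : ℝ)⁻¹ ≤ ρ e := by
      by_contra! hcon
      have hne : (G.incidenceFinset v).Nonempty := by
        rw [← Finset.card_pos, SimpleGraph.card_incidenceFinset_eq_degree, ← hv]
        exact hdpos
      have h3 := Finset.sum_lt_sum_of_nonempty hne hcon
      rw [Finset.sum_const, SimpleGraph.card_incidenceFinset_eq_degree, ← hv,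
        nsmul_eq_mul, mul_inv_cancel₀ hd.ne'] at h3
      exact absurd (h2 v) (not_le.2 h3)
    rw [SimpleGraph.mem_incidenceFinset] at he
    have heE : e ∈ G.edgeFinset := SimpleGraph.mem_edgeFinset.2 he.1
    rw [hen]
    have h4 : σ e * ρ e ^ p ≤ ∑ e ∈ G.edgeFinset, σ e * ρ e ^ p :=
      Finset.single_le_sum (f := fun e => σ e * ρ e ^ p)
        (fun i _ => mul_nonneg (hσ i).le (Real.rpow_nonneg (h0 i) p)) heE
    refine le_trans ?_ h4
    rw [div_eq_mul_inv, ← Real.inv_rpow hd.le]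
    exact mul_le_mul (Finset.inf'_le _ heE)
      (Real.rpow_le_rpow (by positivity) hle (by linarith))
      (by positivity) (hσ e).le
  · refine csInf_le ⟨0, ?_⟩ ⟨_, hmem, ?_⟩
    · rintro _ ⟨ρ, hρ, rfl⟩
      rw [hen]
      exact Finset.sum_nonneg fun i _ => mul_nonneg (hσ i).le (Real.rpow_nonneg (hρ.1 i) p)
    · rw [hen, Finset.sum_div]
      refine Finset.sum_congr rfl fun e he => ?_
      rw [if_pos he, Real.inv_rpow hd.le, div_eq_mul_inv]
end
end

section
/- Let G be a finite simple unweighted d-regular graph with d ≥ 1, and let Γ_star be the family of stars of G. Then for every 1 < p < ∞, the constant density ρ ≡ 1/d is extremal (it is admissible and attains the infimum defining the modulus), and Mod_p(Γ_star) = |E| / d^p. -/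
open Finset

noncomputable section
open scoped Classical

variable {V : Type*}

theorem inc_two [Fintype V] [DecidableEq V] (G : SimpleGraph V) (e : Sym2 V)
    (he : e ∈ G.edgeSet) :
    ∑ v : V, (if e ∈ G.incidenceFinset v then (1 : ℝ) else 0) = 2 := by
  induction e using Sym2.ind with
  | _ a b =>
    have hab : a ≠ b := G.ne_of_adj he
    have : ∀ v : V, (if s(a, b) ∈ G.incidenceFinset v then (1 : ℝ) else 0)
        = (if v = a then 1 else 0) + (if v = b then 1 else 0) := by
      intro v
      have hm : s(a, b) ∈ G.incidenceFinset v ↔ (v = a ∨ v = b) := by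
        rw [SimpleGraph.mem_incidenceFinset, SimpleGraph.incidenceSet]
        simp only [Set.mem_ofPred_eq, Sym2.mem_iff, he, true_and]
      by_cases h1 : v = a
      · have h2 : v ≠ b := fun h => hab (h1.symm.trans h)
        simp only [hm, h1, true_or, if_true]
        simp [hab]
      · by_cases h2 : v = b
        · simp only [hm, h2, or_true, if_true]
          simp [hab.symm]
        · simp [hm, h1, h2]
    rw [Finset.sum_congr rfl fun v _ => this v, Finset.sum_add_distrib]
    simp
    norm_num

theorem inc_sum [Fintype V] [DecidableEq V] (G : SimpleGraph V) (d : ℕ)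
    (hreg : ∀ v, (G.incidenceFinset v).card = d) (v : V) :
    ∑ e ∈ G.edgeFinset, (if e ∈ G.incidenceFinset v then (1 : ℝ) else 0) = d := by
  rw [Finset.sum_ite_mem, Finset.inter_eq_right.2 (G.incidenceFinset_subset v)]
  simp [hreg v]

theorem double_count [Fintype V] [DecidableEq V] (G : SimpleGraph V) (ρ : Sym2 V → ℝ) :
    ∑ v : V, ∑ e ∈ G.edgeFinset, (if e ∈ G.incidenceFinset v then (1 : ℝ) else 0) * ρ e
      = 2 * ∑ e ∈ G.edgeFinset, ρ e := by
  rw [Finset.sum_comm, Finset.mul_sum]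
  refine Finset.sum_congr rfl fun e he => ?_
  rw [← Finset.sum_mul, inc_two G e (SimpleGraph.mem_edgeFinset.1 he)]

theorem lower [Fintype V] [DecidableEq V] (G : SimpleGraph V) (d : ℕ) (hd : 1 ≤ d)
    (hreg : ∀ v, (G.incidenceFinset v).card = d) (p : ℝ) (hp : 1 < p) (ρ : Sym2 V → ℝ)
    (hρ : ρ ∈ Adm G (Γstar G)) :
    (G.edgeFinset.card : ℝ) / (d : ℝ) ^ p ≤ energy p (fun _ => 1) G ρ := by
  obtain ⟨h0, -, h1⟩ := hρ
  have hd0 : (0 : ℝ) < d := by exact_mod_cast hd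
  have hV : (Fintype.card V : ℝ) ≤ 2 * ∑ e ∈ G.edgeFinset, ρ e := by
    rw [← double_count]
    calc (Fintype.card V : ℝ) = ∑ v : V, (1 : ℝ) := by simp
      _ ≤ _ := Finset.sum_le_sum fun v _ => h1 _ ⟨v, rfl⟩
  have hE : (Fintype.card V : ℝ) * d = 2 * (G.edgeFinset.card : ℝ) := by
    have := double_count G (fun _ => 1)
    simp only [mul_one, inc_sum G d hreg] at this
    simpa using this
  have hS : (G.edgeFinset.card : ℝ) ≤ d * ∑ e ∈ G.edgeFinset, ρ e := by
    nlinarith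
  have hB : ∀ e ∈ G.edgeFinset, 1 + p * (d * ρ e - 1) ≤ (d : ℝ) ^ p * (1 * ρ e ^ p) := by
    intro e _
    have hn : 0 ≤ d * ρ e := mul_nonneg hd0.le (h0 e)
    have := one_add_mul_self_le_rpow_one_add (s := d * ρ e - 1) (by linarith) hp.le
    rw [add_sub_cancel, Real.mul_rpow hd0.le (h0 e)] at this
    linarith
  have hsum := Finset.sum_le_sum hB
  rw [← Finset.mul_sum, Finset.sum_add_distrib, ← Finset.mul_sum, Finset.sum_sub_distrib,
    ← Finset.mul_sum] at hsum
  simp only [Finset.sum_const, nsmul_eq_mul, mul_one] at hsum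
  rw [div_le_iff₀ (Real.rpow_pos_of_pos hd0 p)]
  unfold energy
  nlinarith

/-- For an unweighted `d`-regular graph and `1 < p < ∞`, the constant density `ρ ≡ 1/d`
is extremal for the star modulus and `Mod_p(Γ_star) = |E| / d^p`. -/
theorem mod_star_regular [Fintype V] [DecidableEq V] (G : SimpleGraph V)
    [DecidableRel G.Adj] (d : ℕ) (hd : 1 ≤ d) (hreg : G.IsRegularOfDegree d)
    (p : ℝ) (hp : 1 < p) :
    (fun e => if e ∈ G.edgeFinset then ((d : ℝ))⁻¹ else 0) ∈ Adm G (Γstar G) ∧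
    energy p (fun _ => 1) G (fun e => if e ∈ G.edgeFinset then ((d : ℝ))⁻¹ else 0)
      = Modulus p (fun _ => 1) G (Γstar G) ∧
    Modulus p (fun _ => 1) G (Γstar G) = (G.edgeFinset.card : ℝ) / (d : ℝ) ^ p := by
  have hcard : ∀ v, (G.incidenceFinset v).card = d := by
    intro v
    rw [SimpleGraph.card_incidenceFinset_eq_degree]
    exact hreg v
  have hd0 : (0 : ℝ) < d := by exact_mod_cast hd
  have hadm : (fun e => if e ∈ G.edgeFinset then ((d : ℝ))⁻¹ else 0) ∈ Adm G (Γstar G) := by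
    refine ⟨fun e => ?_, fun e he => ?_, ?_⟩
    · dsimp only
      split_ifs
      · positivity
      · exact le_rfl
    · simp [SimpleGraph.mem_edgeFinset, he]
    · rintro _ ⟨v, rfl⟩
      have := inc_sum G d (fun v => by convert hcard v) v
      have h2 := congrArg (· * ((d : ℝ))⁻¹) this
      simp only [Finset.sum_mul, mul_inv_cancel₀ hd0.ne'] at h2
      refine h2.symm.le.trans ?_
      refine Finset.sum_le_sum fun e he => ?_
      have he' : e ∈ G.edgeSet := by simpa only [SimpleGraph.mem_edgeFinset] using he
      simp only [SimpleGraph.mem_edgeFinset, he', if_true]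
      exact le_rfl
  have hen : energy p (fun _ => 1) G (fun e => if e ∈ G.edgeFinset then ((d : ℝ))⁻¹ else 0)
      = (G.edgeFinset.card : ℝ) / (d : ℝ) ^ p := by
    have : ∀ e ∈ G.edgeFinset, (1 : ℝ) * (if e ∈ G.edgeFinset then ((d : ℝ))⁻¹ else 0) ^ p
        = ((d : ℝ) ^ p)⁻¹ := by
      intro e he
      rw [if_pos he, one_mul, Real.inv_rpow hd0.le]
    have h := Finset.sum_congr rfl this
    rw [Finset.sum_const, nsmul_eq_mul, ← div_eq_mul_inv] at h
    rw [← h]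
    unfold energy
    refine Finset.sum_congr ?_ fun _ _ => rfl
    ext e
    simp only [SimpleGraph.mem_edgeFinset]
  have hmod : Modulus p (fun _ => 1) G (Γstar G) = (G.edgeFinset.card : ℝ) / (d : ℝ) ^ p := by
    refine IsLeast.csInf_eq ⟨⟨_, hadm, hen⟩, ?_⟩
    rintro _ ⟨ρ, hρ, rfl⟩
    have hl := lower G d hd (fun v => by convert hcard v) p hp ρ hρ
    refine le_trans (le_of_eq ?_) hl
    congr!
  exact ⟨hadm, hen.trans hmod.symm, hmod⟩
end
end

section
/- Let G be a finite simple graph with no isolated vertices and positive edge weights σ, let Γ_star be the family of stars of G, let 1 < p < ∞ and let q = p/(p-1). Then Mod_{p,σ}(Γ_star) ≥ (|V|/2)^p · (Σ_{e∈E} σ(e)^{-q/p})^{-p/q}. In particular, if σ ≡ 1 then Mod_p(Γ_star) ≥ (|V| / (2·|E|^{1/q}))^p. -/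
open Finset

noncomputable section
open scoped Classical

variable {V : Type*}

theorem sum_star_aux [Fintype V] [DecidableEq V] (G : SimpleGraph V) (ρ : Sym2 V → ℝ)
    (h : ρ ∈ Adm G (Γstar G)) :
    (Fintype.card V : ℝ) / 2 ≤ ∑ e ∈ G.edgeFinset, ρ e := by
  have h1 : (Fintype.card V : ℝ) ≤ ∑ v : V, ∑ e ∈ G.edgeFinset,
      (if e ∈ G.incidenceFinset v then (1 : ℝ) else 0) * ρ e := by
    have : (Fintype.card V : ℝ) = ∑ v : V, (1 : ℝ) := by simp
    rw [this]
    exact Finset.sum_le_sum fun v _ => h.2.2 _ ⟨v, rfl⟩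
  rw [Finset.sum_comm] at h1
  have h2 : ∀ e ∈ G.edgeFinset, ∑ v : V,
      (if e ∈ G.incidenceFinset v then (1 : ℝ) else 0) * ρ e = 2 * ρ e := by
    intro e he
    rw [← Finset.sum_mul]
    congr 1
    rw [SimpleGraph.mem_edgeFinset] at he
    induction e using Sym2.ind with
    | _ a b =>
      have hab : a ≠ b := G.ne_of_adj he
      have : (Finset.univ.filter fun v => s(a, b) ∈ G.incidenceFinset v) = {a, b} := by
        ext v
        have he' : G.Adj a b := he
        simp [SimpleGraph.mem_incidenceFinset, SimpleGraph.incidenceSet, he']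
      rw [Finset.sum_boole, this, Finset.card_pair hab]
      norm_num
  rw [Finset.sum_congr rfl h2, ← Finset.mul_sum] at h1
  linarith

theorem adm_star_nonempty [Fintype V] [DecidableEq V] (G : SimpleGraph V)
    (hiso : ∀ v : V, ∃ u, G.Adj v u) : (Adm G (Γstar G)).Nonempty := by
  refine ⟨fun e => if e ∈ G.edgeSet then 1 else 0, ?_, ?_, ?_⟩
  · intro e
    dsimp only
    split_ifs <;> norm_num
  · intro e he
    simp [he]
  · rintro γ ⟨v, rfl⟩
    obtain ⟨u, hu⟩ := hiso v
    have hm : s(v, u) ∈ G.edgeFinset := by simpa using hu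
    refine le_trans ?_ (Finset.single_le_sum (f := fun e =>
      (if e ∈ G.incidenceFinset v then (1 : ℝ) else 0) * (if e ∈ G.edgeSet then 1 else 0)) ?_ hm)
    · simp [SimpleGraph.mem_incidenceFinset, SimpleGraph.incidenceSet, hu]
    · intro e _
      split_ifs <;> norm_num

theorem energy_star_aux [Fintype V] [DecidableEq V] (G : SimpleGraph V)
    (σ : Sym2 V → ℝ) (hσ : ∀ e, 0 < σ e)
    (p q : ℝ) (hpq : p.HolderConjugate q) (ρ : Sym2 V → ℝ) (h : ρ ∈ Adm G (Γstar G)) :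
    ((Fintype.card V : ℝ) / 2) ^ p *
        (∑ e ∈ G.edgeFinset, σ e ^ (-(q / p))) ^ (-(p / q)) ≤ energy p σ G ρ := by
  have hp := hpq.pos
  have hq := hpq.symm.pos
  have h1 := sum_star_aux G ρ h
  have hS : 0 ≤ ∑ e ∈ G.edgeFinset, σ e ^ (-(q / p)) :=
    Finset.sum_nonneg fun e _ => Real.rpow_nonneg (hσ e).le _
  have hE : 0 ≤ energy p σ G ρ :=
    Finset.sum_nonneg fun e _ => mul_nonneg (hσ e).le (Real.rpow_nonneg (h.1 e) _)
  have h2 := Real.inner_le_Lp_mul_Lq_of_nonneg G.edgeFinset hpq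
    (f := fun e => σ e ^ (1 / p) * ρ e) (g := fun e => σ e ^ (-(1 / p)))
    (fun e _ => mul_nonneg (Real.rpow_nonneg (hσ e).le _) (h.1 e))
    (fun e _ => Real.rpow_nonneg (hσ e).le _)
  have e1 : ∀ e, σ e ^ (1 / p) * ρ e * σ e ^ (-(1 / p)) = ρ e := by
    intro e
    rw [mul_right_comm, ← Real.rpow_add (hσ e)]
    simp
  have e2 : ∀ e, (σ e ^ (1 / p) * ρ e) ^ p = σ e * ρ e ^ p := by
    intro e
    rw [Real.mul_rpow (Real.rpow_nonneg (hσ e).le _) (h.1 e), ← Real.rpow_mul (hσ e).le,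
      one_div_mul_cancel hp.ne', Real.rpow_one]
  have e3 : ∀ e, (σ e ^ (-(1 / p))) ^ q = σ e ^ (-(q / p)) := by
    intro e
    rw [← Real.rpow_mul (hσ e).le]
    congr 1
    ring
  simp only [e1, e2, e3] at h2
  change _ ≤ (energy p σ G ρ) ^ (1 / p) * _ at h2
  generalize energy p σ G ρ = E at *
  generalize (∑ e ∈ G.edgeFinset, σ e ^ (-(q / p))) = S at *
  have h3 : ((Fintype.card V : ℝ) / 2) ^ p ≤ E * S ^ (p / q) := by
    have := Real.rpow_le_rpow (by positivity) (h1.trans h2) hp.le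
    rw [Real.mul_rpow (by positivity) (by positivity), ← Real.rpow_mul hE, ← Real.rpow_mul hS,
      one_div_mul_cancel hp.ne', Real.rpow_one] at this
    convert this using 3
    ring
  rcases hS.eq_or_lt with h0 | h0
  · rw [← h0, Real.zero_rpow (by simp [hp.ne', hq.ne']), mul_zero]
    exact hE
  · rw [Real.rpow_neg hS, ← div_eq_mul_inv, div_le_iff₀ (by positivity)]
    exact h3

/-- `Mod_{p,σ}(Γ_star) ≥ (|V|/2)^p (Σ_e σ(e)^{-q/p})^{-p/q}`; in particular, if `σ ≡ 1`,
then `Mod_p(Γ_star) ≥ (|V| / (2 |E|^{1/q}))^p`. -/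
theorem mod_star_lower_bound [Fintype V] [DecidableEq V] (G : SimpleGraph V)
    (hiso : ∀ v : V, ∃ u, G.Adj v u) (σ : Sym2 V → ℝ) (hσ : ∀ e, 0 < σ e)
    (p q : ℝ) (hp : 1 < p) (hq : q = p / (p - 1)) :
    ((Fintype.card V : ℝ) / 2) ^ p *
        (∑ e ∈ G.edgeFinset, σ e ^ (-(q / p))) ^ (-(p / q))
      ≤ Modulus p σ G (Γstar G) ∧
    ((∀ e, σ e = 1) →
      ((Fintype.card V : ℝ) / (2 * (G.edgeFinset.card : ℝ) ^ (1 / q))) ^ p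
        ≤ Modulus p σ G (Γstar G)) := by
  have hpq : p.HolderConjugate q := (Real.holderConjugate_iff_eq_conjExponent hp).2 hq
  have key : ((Fintype.card V : ℝ) / 2) ^ p *
        (∑ e ∈ G.edgeFinset, σ e ^ (-(q / p))) ^ (-(p / q))
      ≤ Modulus p σ G (Γstar G) := by
    refine le_csInf ((adm_star_nonempty G hiso).image _) ?_
    rintro _ ⟨ρ, hρ, rfl⟩
    exact energy_star_aux G σ hσ p q hpq ρ hρ
  refine ⟨key, fun h1 => le_trans (le_of_eq ?_) key⟩
  simp only [h1, Real.one_rpow, Finset.sum_const, nsmul_eq_mul, mul_one]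
  rw [← div_div, Real.div_rpow (by positivity) (by positivity), ← Real.rpow_mul (by positivity),
    Real.rpow_neg (by positivity), div_eq_mul_inv]
  congr 3
  ring
end
end

section
/- Let G = W_n be the unweighted wheel graph on n ≥ 6 vertices (a hub vertex v adjacent to all n−1 rim vertices, which form a cycle of length n−1), and let Γ_star be the family of stars of W_n. Then the density ρ_0 with ρ_0(e) = 1/5 on the spoke edges (edges incident to the hub) and ρ_0(e) = 2/5 on the rim edges is extremal, and Mod_2(Γ_star) = (n−1)/5. -/
open Finset

noncomputable section
open scoped Classical

variable {V : Type*}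

/-- The wheel graph on `Fin n`: the hub `0` is adjacent to all rim vertices
`1, …, n-1`, which form a cycle `1 — 2 — ⋯ — (n-1) — 1`. -/
def wheelGraph (n : ℕ) [NeZero n] : SimpleGraph (Fin n) :=
  SimpleGraph.fromRel fun u v =>
    u = 0 ∨ (v : ℕ) = (u : ℕ) + 1 ∨ ((u : ℕ) = n - 1 ∧ (v : ℕ) = 1)

/-- The candidate extremal density. -/
def rhoWheel (n : ℕ) [NeZero n] : Sym2 (Fin n) → ℝ :=
  fun e => if e ∈ (wheelGraph n).edgeFinset then
        (if (0 : Fin n) ∈ e then (1 / 5 : ℝ) else 2 / 5) else 0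

lemma wheel_star_sum {n : ℕ} [NeZero n] (f : Sym2 (Fin n) → ℝ) (u : Fin n) :
    ∑ e ∈ (wheelGraph n).edgeFinset,
      (if e ∈ (wheelGraph n).incidenceFinset u then (1 : ℝ) else 0) * f e
    = ∑ w ∈ univ.filter (fun w => (wheelGraph n).Adj u w), f s(u, w) := by
  have h1 : ∑ e ∈ (wheelGraph n).edgeFinset,
      (if e ∈ (wheelGraph n).incidenceFinset u then (1 : ℝ) else 0) * f e
      = ∑ e ∈ (wheelGraph n).edgeFinset.filter
          (fun e => e ∈ (wheelGraph n).incidenceFinset u), f e := by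
    rw [Finset.sum_filter]
    refine Finset.sum_congr rfl fun e _ => ?_
    split_ifs <;> simp
  rw [h1]
  symm
  refine Finset.sum_bij (fun w _ => s(u, w)) ?_ ?_ ?_ ?_
  · intro w hw
    simp only [Finset.mem_filter, Finset.mem_univ, true_and] at hw
    simp [SimpleGraph.mem_incidenceFinset, SimpleGraph.incidenceSet, hw]
  · intro a _ b _ hab
    exact Sym2.congr_right.mp hab
  · intro e he
    simp only [Finset.mem_filter, SimpleGraph.mem_incidenceFinset, SimpleGraph.incidenceSet,
      Set.mem_setOf_eq] at he
    obtain ⟨-, he, hu⟩ := he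
    obtain ⟨w, rfl⟩ := hu
    exact ⟨w, by simpa using he, rfl⟩
  · intro _ _
    rfl

lemma adj_iff {n : ℕ} [NeZero n] (u v : Fin n) :
    (wheelGraph n).Adj u v ↔ (u : ℕ) ≠ v ∧
      (((u : ℕ) = 0 ∨ (v : ℕ) = (u : ℕ) + 1 ∨ ((u : ℕ) = n - 1 ∧ (v : ℕ) = 1)) ∨
       ((v : ℕ) = 0 ∨ (u : ℕ) = (v : ℕ) + 1 ∨ ((v : ℕ) = n - 1 ∧ (u : ℕ) = 1))) := by
  have h0 : ∀ x : Fin n, x = 0 ↔ (x : ℕ) = 0 := fun x => (Fin.val_eq_zero_iff).symm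
  simp only [wheelGraph, SimpleGraph.fromRel_adj, h0, ne_eq, Fin.ext_iff, Fin.val_zero]

lemma rho_adj {n : ℕ} [NeZero n] {u v : Fin n} (h : (wheelGraph n).Adj u v) :
    rhoWheel n s(u, v) = if u = 0 ∨ v = 0 then 1 / 5 else 2 / 5 := by
  simp [rhoWheel, h, eq_comm]

lemma star_hub {n : ℕ} [NeZero n] (hn : 6 ≤ n) :
    ∑ w ∈ univ.filter (fun w => (wheelGraph n).Adj 0 w), rhoWheel n s(0, w)
      = ((n : ℝ) - 1) / 5 := by
  have hf : univ.filter (fun w => (wheelGraph n).Adj 0 w) = univ.erase 0 := by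
    ext w
    have h0 : w = 0 ↔ (w : ℕ) = 0 := (Fin.val_eq_zero_iff).symm
    simp only [Finset.mem_filter, Finset.mem_univ, true_and, and_true, adj_iff,
      Finset.mem_erase, ne_eq, h0]
    have hz : ((0 : Fin n) : ℕ) = 0 := Fin.val_eq_zero_iff.mpr rfl
    omega
  have hc : ∀ w ∈ univ.filter (fun w => (wheelGraph n).Adj 0 w),
      rhoWheel n s(0, w) = 1 / 5 := by
    intro w hw
    rw [rho_adj (by simpa using hw)]
    simp
  rw [Finset.sum_congr rfl hc, hf, Finset.sum_const, Finset.card_erase_of_mem (by simp)]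
  have : ((n - 1 : ℕ) : ℝ) = (n : ℝ) - 1 := by
    rw [Nat.cast_sub (by omega)]; simp
  simp [this]
  ring

lemma star_rim {n : ℕ} [NeZero n] (hn : 6 ≤ n) (u : Fin n) (hu : u ≠ 0) :
    ∑ w ∈ univ.filter (fun w => (wheelGraph n).Adj u w), rhoWheel n s(u, w) = 1 := by
  have hu' : (u : ℕ) ≠ 0 := fun h => hu (Fin.val_eq_zero_iff.mp h)
  have hun := u.isLt
  obtain ⟨a, ha⟩ : ∃ a : Fin n, (a : ℕ) = if (u : ℕ) = n - 1 then 1 else (u : ℕ) + 1 :=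
    ⟨⟨if (u : ℕ) = n - 1 then 1 else u + 1, by split_ifs <;> omega⟩, rfl⟩
  obtain ⟨b, hb⟩ : ∃ b : Fin n, (b : ℕ) = if (u : ℕ) = 1 then n - 1 else (u : ℕ) - 1 :=
    ⟨⟨if (u : ℕ) = 1 then n - 1 else u - 1, by split_ifs <;> omega⟩, rfl⟩
  have hf : univ.filter (fun w => (wheelGraph n).Adj u w) = {0, a, b} := by
    ext w
    have := w.isLt
    simp only [Finset.mem_filter, Finset.mem_univ, true_and, adj_iff, Finset.mem_insert,
      Finset.mem_singleton, Fin.ext_iff, Fin.val_zero]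
    split_ifs at ha hb <;> omega
  have hadj : ∀ w ∈ ({0, a, b} : Finset (Fin n)), (wheelGraph n).Adj u w := by
    intro w hw
    rw [← hf] at hw
    simpa using hw
  have h0a : a ≠ 0 := by
    simp only [ne_eq, Fin.ext_iff, Fin.val_zero]
    split_ifs at ha hb <;> omega
  have h0b : b ≠ 0 := by
    simp only [ne_eq, Fin.ext_iff, Fin.val_zero]
    split_ifs at ha hb <;> omega
  have hab : a ≠ b := by
    simp only [ne_eq, Fin.ext_iff]
    split_ifs at ha hb <;> omega
  rw [hf, Finset.sum_insert (by simp [h0a.symm, h0b.symm]), Finset.sum_insert (by simp [hab]),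
    Finset.sum_singleton, rho_adj (hadj 0 (by simp)), rho_adj (hadj a (by simp)),
    rho_adj (hadj b (by simp))]
  simp [hu, h0a, h0b]
  norm_num

lemma double_count_s19 {n : ℕ} [NeZero n] (f : Sym2 (Fin n) → ℝ) :
    ∑ u ∈ univ.erase (0 : Fin n), ∑ e ∈ (wheelGraph n).edgeFinset,
      (if e ∈ (wheelGraph n).incidenceFinset u then (1 : ℝ) else 0) * f e
    = ∑ e ∈ (wheelGraph n).edgeFinset, 5 * rhoWheel n e * f e := by
  rw [Finset.sum_comm]
  refine Finset.sum_congr rfl fun e he => ?_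
  rw [← Finset.sum_mul]
  congr 1
  induction e using Sym2.ind with
  | _ a b =>
    have hadj : (wheelGraph n).Adj a b := by simpa using he
    have hne := hadj.ne
    rw [rho_adj hadj, ← Finset.sum_filter, Finset.sum_const]
    have hf : (univ.erase (0 : Fin n)).filter
        (fun u => s(a, b) ∈ (wheelGraph n).incidenceFinset u)
        = ({a, b} : Finset (Fin n)).erase 0 := by
      ext u
      simp [SimpleGraph.mem_incidenceFinset, SimpleGraph.incidenceSet, hadj]
    rw [hf]
    by_cases h : a = 0 ∨ b = 0
    · rw [Finset.card_erase_of_mem (by simpa [eq_comm] using h), Finset.card_pair hne]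
      simp [h]
    · rw [Finset.erase_eq_of_notMem (by simpa [eq_comm] using h), Finset.card_pair hne]
      simp [h]
      norm_num

lemma rho_adm {n : ℕ} [NeZero n] (hn : 6 ≤ n) :
    rhoWheel n ∈ Adm (wheelGraph n) (Γstar (wheelGraph n)) := by
  refine ⟨fun e => ?_, fun e he => ?_, ?_⟩
  · unfold rhoWheel
    split_ifs <;> norm_num
  · simp [rhoWheel, he]
  · rintro γ ⟨u, rfl⟩
    have hs := wheel_star_sum (rhoWheel n) u
    refine le_of_le_of_eq ?_ (Eq.trans hs.symm ?_)
    · by_cases hu : u = 0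
      · subst hu
        rw [star_hub hn]
        have : (6 : ℝ) ≤ n := by exact_mod_cast hn
        linarith
      · rw [star_rim hn u hu]
    · rfl

lemma card_rim {n : ℕ} [NeZero n] :
    ∑ _u ∈ univ.erase (0 : Fin n), (1 : ℝ) = (n : ℝ) - 1 := by
  have hn : 1 ≤ n := NeZero.one_le
  rw [Finset.sum_const, Finset.card_erase_of_mem (by simp)]
  simp [Nat.cast_sub hn]

lemma energy_rho {n : ℕ} [NeZero n] (hn : 6 ≤ n) :
    energy2 (wheelGraph n) (rhoWheel n) = ((n : ℝ) - 1) / 5 := by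
  have h := double_count_s19 (rhoWheel n)
  rw [Finset.sum_congr rfl (g := fun _ => (1 : ℝ))
    (fun u hu => (wheel_star_sum _ u).trans (star_rim hn u (by simpa using hu))), card_rim] at h
  have h2 : ∑ e ∈ (wheelGraph n).edgeFinset, 5 * rhoWheel n e * rhoWheel n e
      = 5 * energy2 (wheelGraph n) (rhoWheel n) := by
    unfold energy2
    rw [Finset.mul_sum]
    exact Finset.sum_congr rfl fun e _ => by ring
  linarith

lemma energy_lower {n : ℕ} [NeZero n] (hn : 6 ≤ n) (ρ : Sym2 (Fin n) → ℝ)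
    (hρ : ρ ∈ Adm (wheelGraph n) (Γstar (wheelGraph n))) :
    ((n : ℝ) - 1) / 5 ≤ energy2 (wheelGraph n) ρ := by
  have h := double_count_s19 ρ
  have h1 : ∑ _u ∈ univ.erase (0 : Fin n), (1 : ℝ) ≤
      ∑ u ∈ univ.erase (0 : Fin n), ∑ e ∈ (wheelGraph n).edgeFinset,
      (if e ∈ (wheelGraph n).incidenceFinset u then (1 : ℝ) else 0) * ρ e := by
    refine Finset.sum_le_sum fun u _ => ?_
    exact hρ.2.2 _ ⟨u, rfl⟩
  rw [card_rim, h] at h1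
  have h2 : 0 ≤ ∑ e ∈ (wheelGraph n).edgeFinset, (ρ e - rhoWheel n e) ^ 2 :=
    Finset.sum_nonneg fun e _ => sq_nonneg _
  have h3 : ∑ e ∈ (wheelGraph n).edgeFinset, (ρ e - rhoWheel n e) ^ 2
      = energy2 (wheelGraph n) ρ + energy2 (wheelGraph n) (rhoWheel n)
        - 2 / 5 * ∑ e ∈ (wheelGraph n).edgeFinset, 5 * rhoWheel n e * ρ e := by
    unfold energy2
    rw [Finset.mul_sum, ← Finset.sum_add_distrib, ← Finset.sum_sub_distrib]
    exact Finset.sum_congr rfl fun e _ => by ring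
  have h4 := energy_rho hn
  linarith

lemma mod2_eq {n : ℕ} [NeZero n] (hn : 6 ≤ n) :
    Mod2 (wheelGraph n) (Γstar (wheelGraph n)) = ((n : ℝ) - 1) / 5 := by
  have : IsLeast (energy2 (wheelGraph n) '' Adm (wheelGraph n) (Γstar (wheelGraph n)))
      (((n : ℝ) - 1) / 5) := by
    refine ⟨⟨rhoWheel n, rho_adm hn, energy_rho hn⟩, ?_⟩
    rintro _ ⟨ρ, hρ, rfl⟩
    exact energy_lower hn ρ hρ
  exact this.csInf_eq

/-- For the wheel graph `W_n`, `n ≥ 6`: the density equal to `1/5` on the spokes and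
`2/5` on the rim is extremal for the star modulus, and `Mod_2(Γ_star) = (n-1)/5`. -/
theorem mod2_wheelGraph (n : ℕ) [NeZero n] (hn : 6 ≤ n) :
    (fun e => if e ∈ (wheelGraph n).edgeFinset then
        (if (0 : Fin n) ∈ e then (1 / 5 : ℝ) else 2 / 5) else 0)
      ∈ Adm (wheelGraph n) (Γstar (wheelGraph n)) ∧
    energy2 (wheelGraph n) (fun e => if e ∈ (wheelGraph n).edgeFinset then
        (if (0 : Fin n) ∈ e then (1 / 5 : ℝ) else 2 / 5) else 0)
      = Mod2 (wheelGraph n) (Γstar (wheelGraph n)) ∧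
    Mod2 (wheelGraph n) (Γstar (wheelGraph n)) = ((n : ℝ) - 1) / 5 := by
  have h1 := rho_adm hn
  have h2 := energy_rho hn
  have h3 := mod2_eq hn
  exact ⟨h1, h2.trans h3.symm, h3⟩
end
end
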